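/- For all positive integers m and n, there is an injective group homomorphism from G(P_m) into G(P_n) if and only if m ≤ n. -/

import Mathlib

open SimpleGraph

/-- The set of commutator relations of a graph: one commutator for each edge. -/
def raagRels {V : Type} (G : SimpleGraph V) : Set (FreeGroup V) :=
  {r | ∃ u v : V, G.Adj u v ∧
    r = FreeGroup.of u * FreeGroup.of v * (FreeGroup.of u)⁻¹ * (FreeGroup.of v)⁻¹}

/-- The right-angled Artin group `A(G)` of a graph `G`. -/
abbrev RAAG {V : Type} (G : SimpleGraph V) : Type := PresentedGroup (raagRels G)

/-- `G(Γ) = A(Γᶜ)`, the RAAG on the complement graph. -/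
abbrev GG {V : Type} (G : SimpleGraph V) : Type := RAAG Gᶜ

/-- A linear forest: an acyclic graph all of whose vertices have degree at most 2. -/
def IsLinearForest {V : Type} (G : SimpleGraph V) : Prop :=
  G.IsAcyclic ∧ ∀ v : V, (G.neighborSet v).ncard ≤ 2

/-- The star of a vertex: the vertex together with its neighbours. -/
def starSet {V : Type} (G : SimpleGraph V) (v : V) : Set V :=
  insert v (G.neighborSet v)

/-- The double `D_v(G)` of `G` along the star of `v`: original vertices together with
copies of the vertices outside the star. -/
def GraphDouble {V : Type} (G : SimpleGraph V) (v : V) :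
    SimpleGraph (V ⊕ {w : V // w ∉ starSet G v}) :=
  SimpleGraph.fromRel (fun x y =>
    match x, y with
    | Sum.inl a, Sum.inl b => G.Adj a b
    | Sum.inr a, Sum.inr b => G.Adj a.1 b.1
    | Sum.inl a, Sum.inr b => a ∈ starSet G v ∧ G.Adj a b.1
    | Sum.inr _, Sum.inl _ => False)

/-- Subdivision of the edge `[v,w]` of `Λ`, with `none` as the new vertex. -/
def SubdivEdge {V : Type} (Λ : SimpleGraph V) (v w : V) : SimpleGraph (Option V) :=
  SimpleGraph.fromRel (fun x y =>
    match x, y with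
    | some a, some b => Λ.Adj a b ∧ ¬((a = v ∧ b = w) ∨ (a = w ∧ b = v))
    | some a, none => a = v ∨ a = w
    | none, some _ => False
    | none, none => False)

/-- The graph `Λ_u⁻(w₁,w₂)`, with `none` as the new vertex `v`. -/
def MinusGraph {V : Type} (Λ : SimpleGraph V) (u w₁ w₂ : V) : SimpleGraph (Option V) :=
  SimpleGraph.fromRel (fun x y =>
    match x, y with
    | some a, some b => Λ.Adj a b ∧
        ¬((a = u ∧ b = w₁) ∨ (a = w₁ ∧ b = u) ∨ (a = u ∧ b = w₂) ∨ (a = w₂ ∧ b = u))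
    | some a, none => a = w₁ ∨ a = u ∨ a = w₂
    | none, some _ => False
    | none, none => False)

/-- The graph `Λ_u⁺(w₁,w₂)`: `Λ_u⁻(w₁,w₂)` with the edge `[u,w₂]` added back. -/
def PlusGraph {V : Type} (Λ : SimpleGraph V) (u w₁ w₂ : V) : SimpleGraph (Option V) :=
  SimpleGraph.fromRel (fun x y =>
    (MinusGraph Λ u w₁ w₂).Adj x y ∨ (x = some u ∧ y = some w₂))

/-- number of occurrences of the letter `x` (with either sign) in the reduced form of `w` -/
noncomputable def letterCount {X : Type} (x : X) (w : FreeGroup X) : ℕ :=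
  open Classical in (w.toWord.map Prod.fst).count x

theorem letterCount_mul {X : Type} (x : X) (u w : FreeGroup X) :
    letterCount x (u * w) ≤ letterCount x u + letterCount x w := by
  classical
  unfold letterCount
  have h := ((FreeGroup.toWord_mul_sublist u w).map Prod.fst).count_le x
  rw [List.map_append, List.count_append] at h
  convert h

theorem letterCount_inv {X : Type} (x : X) (u : FreeGroup X) :
    letterCount x u⁻¹ = letterCount x u := by
  classical
  unfold letterCount
  rw [FreeGroup.toWord_inv]
  simp [FreeGroup.invRev, Function.comp_def]

theorem letterCount_map {X : Type} (e : X ≃ X) (x : X) (u : FreeGroup X) :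
    letterCount (e x) (FreeGroup.freeGroupCongr e u) = letterCount x u := by
  classical
  unfold letterCount
  have : (FreeGroup.freeGroupCongr e u).toWord
      = u.toWord.map (fun p => (e p.1, p.2)) := by
    conv_lhs => rw [← FreeGroup.mk_toWord (x := u)]
    simp only [FreeGroup.freeGroupCongr_apply, FreeGroup.map.mk, FreeGroup.toWord_mk]
    apply FreeGroup.IsReduced.reduce_eq
    have := FreeGroup.isReduced_toWord (x := u)
    unfold FreeGroup.IsReduced at *
    rw [List.isChain_map]
    refine this.imp ?_
    intro a b h h1
    exact h (e.injective h1)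
  rw [this]
  simp only [List.map_map]
  have h2 : (Prod.fst ∘ fun p : X × Bool => (e p.1, p.2)) = e ∘ Prod.fst := by ext; rfl
  rw [h2, ← List.map_map]
  convert List.count_map_of_injective _ e e.injective x

/-- letters whose number of occurrences in powers of `w` is unbounded -/
def asympSupp {X : Type} (w : FreeGroup X) : Set X :=
  {x | ∀ C : ℕ, ∃ n : ℕ, C < letterCount x (w ^ n)}

theorem asympSupp_conj_subset {X : Type} (f w : FreeGroup X) :
    asympSupp w ⊆ asympSupp (f * w * f⁻¹) := by
  intro x hx C
  obtain ⟨n, hn⟩ := hx (C + 2 * letterCount x f)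
  refine ⟨n, ?_⟩
  rw [conj_pow]
  have h1 : w ^ n = f⁻¹ * (f * w ^ n * f⁻¹) * f := by group
  have h2 := letterCount_mul x (f⁻¹ * (f * w ^ n * f⁻¹)) f
  have h3 := letterCount_mul x f⁻¹ (f * w ^ n * f⁻¹)
  rw [← h1] at h2
  rw [letterCount_inv] at h3
  omega

theorem asympSupp_map {X : Type} (e : X ≃ X) (w : FreeGroup X) (x : X) :
    e x ∈ asympSupp (FreeGroup.freeGroupCongr e w) ↔ x ∈ asympSupp w := by
  simp only [asympSupp, Set.mem_ofPred_eq, ← map_pow, letterCount_map]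

open Classical in
theorem mem_pow_letters {X : Type} (w : FreeGroup X) (n : ℕ) :
    ∀ p ∈ (w ^ n).toWord, p ∈ w.toWord := by
  induction n with
  | zero => simp
  | succ n ih =>
    intro p hp
    rw [pow_succ] at hp
    have := (FreeGroup.toWord_mul_sublist _ _).subset hp
    rcases List.mem_append.1 this with h | h
    · exact ih p h
    · exact h

open Classical in
theorem asympSupp_subset {X : Type} (w : FreeGroup X) :
    asympSupp w ⊆ {x | x ∈ w.toWord.map Prod.fst} := by
  intro x hx
  obtain ⟨n, hn⟩ := hx 0
  unfold letterCount at hn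
  have h := List.count_pos_iff.1 hn
  obtain ⟨p, hp, rfl⟩ := List.mem_map.1 h
  exact List.mem_map_of_mem (mem_pow_letters w n p hp)

open Classical in
theorem asympSupp_finite {X : Type} (w : FreeGroup X) : (asympSupp w).Finite :=
  (List.finite_toSet (w.toWord.map Prod.fst)).subset (asympSupp_subset w)

theorem asympSupp_nonempty {X : Type} (w : FreeGroup X) (hw : w ≠ 1) :
    (asympSupp w).Nonempty := by
  classical
  by_contra hne
  rw [Set.not_nonempty_iff_eq_empty] at hne
  have hb : ∀ x : X, ∃ C : ℕ, ∀ n, letterCount x (w ^ n) ≤ C := by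
    intro x
    have : x ∉ asympSupp w := by rw [hne]; simp
    simpa [asympSupp] using this
  choose C hC using hb
  set S : Finset X := (w.toWord.map Prod.fst).toFinset with hS
  have hlen : ∀ n, (w ^ n).toWord.length ≤ ∑ x ∈ S, C x := by
    intro n
    have h1 : (w ^ n).toWord.length = ∑ x ∈ S, letterCount x (w ^ n) := by
      unfold letterCount
      have : (w ^ n).toWord.length = ((w ^ n).toWord.map Prod.fst).length := by simp
      rw [this, ← Multiset.coe_card, ← Multiset.sum_count_eq_card (s := S)]
      · refine Finset.sum_congr rfl fun x _ => ?_
        rw [Multiset.coe_count]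
      · intro a ha
        rw [Multiset.mem_coe] at ha
        obtain ⟨p, hp, rfl⟩ := List.mem_map.1 ha
        rw [hS, List.mem_toFinset]
        exact List.mem_map_of_mem (mem_pow_letters w n p hp)
    rw [h1]
    exact Finset.sum_le_sum fun x _ => hC x n
  set S' : Set (X × Bool) := {p | p ∈ w.toWord}
  have hfin : Finite S' := List.finite_toSet w.toWord
  have hfin2 := List.finite_length_le S' (∑ x ∈ S, C x)
  have hinj : Function.Injective fun n : ℕ => w ^ n := by
    intro a b hab
    refine injective_pow_iff_not_isOfFinOrder.2 ?_ hab
    intro hf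
    obtain ⟨n, hn, h1⟩ := isOfFinOrder_iff_pow_eq_one.1 hf
    exact hw ((pow_left_inj hn.ne').1 (h1.trans (one_pow n).symm))
  have hfin3 := hfin2.image (fun l : List S' => FreeGroup.mk (l.map Subtype.val))
  refine Set.infinite_range_of_injective hinj (hfin3.subset ?_)
  rintro _ ⟨n, rfl⟩
  refine ⟨(w ^ n).toWord.attach.map fun p => ⟨p.1, mem_pow_letters w n p.1 p.2⟩, ?_, ?_⟩
  · simpa using hlen n
  · simp only [List.map_map]
    conv_rhs => rw [← FreeGroup.mk_toWord (x := w ^ n)]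
    congr 1
    exact List.attach_map_subtype_val _

theorem freeGroup_cyclic_of_comm {A : Type} [AddCommGroup A] {X : Type}
    (f : Multiplicative A →* FreeGroup X) (hf : Function.Injective f) :
    ∃ a : A, ∀ b : A, ∃ n : ℤ, b = n • a := by
  have e1 : Multiplicative A ≃* f.range := MonoidHom.ofInjective hf
  have hfree : IsFreeGroup f.range := inferInstance
  have e : Multiplicative A ≃* FreeGroup (IsFreeGroup.Generators f.range) :=
    e1.trans (IsFreeGroup.toFreeGroup f.range)
  generalize IsFreeGroup.Generators f.range = Y at e
  have hcomm : ∀ a b : FreeGroup Y, a * b = b * a := by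
    intro a b
    apply e.symm.injective
    rw [map_mul, map_mul, mul_comm]
  have hsub : Subsingleton Y := by
    classical
    refine ⟨fun a b => ?_⟩
    by_contra hab
    have := congrArg FreeGroup.toWord (hcomm (FreeGroup.of a) (FreeGroup.of b))
    simp [FreeGroup.toWord_mul, FreeGroup.reduce.cons] at this
    exact hab this.1
  rcases isEmpty_or_nonempty Y with hY | ⟨⟨y⟩⟩
  · refine ⟨0, fun b => ⟨0, ?_⟩⟩
    have : Multiplicative.ofAdd b = Multiplicative.ofAdd 0 := e.injective (Subsingleton.elim _ _)
    simpa using this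
  · refine ⟨(e.symm (FreeGroup.of y)).toAdd, fun b => ?_⟩
    have hmem : ∀ g : FreeGroup Y, g ∈ Subgroup.zpowers (FreeGroup.of y) := by
      intro g
      have : Subgroup.closure (Set.range (FreeGroup.of : Y → _)) ≤
          Subgroup.zpowers (FreeGroup.of y) := by
        rw [Subgroup.closure_le]
        rintro _ ⟨z, rfl⟩
        rw [Subsingleton.elim z y]
        exact Subgroup.mem_zpowers _
      rw [FreeGroup.closure_range_of] at this
      exact this trivial
    obtain ⟨n, hn⟩ := hmem (e (Multiplicative.ofAdd b))
    refine ⟨n, ?_⟩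
    have h2 : e.symm (FreeGroup.of y) ^ n = Multiplicative.ofAdd b := by
      rw [← map_zpow]
      change e.symm ((fun z : ℤ => FreeGroup.of y ^ z) n) = _
      rw [hn]; simp
    rw [← toAdd_zpow, h2]; rfl


/-- every (free) abelian subgroup of `G` has rank at most `s` -/
def RankBound (s : ℕ) (G : Type) [Group G] : Prop :=
  ∀ (A : Type) [AddCommGroup A] (f : Multiplicative A →* G), Function.Injective f →
    Module.rank ℤ A ≤ s

theorem RankBound.of_injective {s : ℕ} {G G' : Type} [Group G] [Group G'] (j : G →* G')
    (hj : Function.Injective j) (h : RankBound s G') : RankBound s G := by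
  intro A _ f hf
  exact h A (j.comp f) (hj.comp hf)

/-- kernel of a homomorphism from an additive commutative group, as a submodule -/
def kerMod {A G : Type} [AddCommGroup A] [Group G] (f : Multiplicative A →* G) :
    Submodule ℤ A :=
  AddSubgroup.toIntSubmodule
    { carrier := {a | f (Multiplicative.ofAdd a) = 1}
      zero_mem' := by simp
      add_mem' := by
        intro a b ha hb
        change f (Multiplicative.ofAdd (a + b)) = 1
        rw [ofAdd_add, map_mul, show f (Multiplicative.ofAdd a) = 1 from ha,
          show f (Multiplicative.ofAdd b) = 1 from hb, one_mul]
      neg_mem' := by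
        intro a ha
        change f (Multiplicative.ofAdd (-a)) = 1
        rw [ofAdd_neg, map_inv, show f (Multiplicative.ofAdd a) = 1 from ha, inv_one] }

theorem mem_kerMod {A G : Type} [AddCommGroup A] [Group G] (f : Multiplicative A →* G) (a : A) :
    a ∈ kerMod f ↔ f (Multiplicative.ofAdd a) = 1 := Iff.rfl

theorem kerMod_sub {A G : Type} [AddCommGroup A] [Group G] (f : Multiplicative A →* G) (a b : A) :
    a - b ∈ kerMod f ↔ f (Multiplicative.ofAdd a) = f (Multiplicative.ofAdd b) := by
  rw [mem_kerMod, ofAdd_sub, map_div, div_eq_one]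

theorem RankBound.rank_le {s : ℕ} {A G : Type} [AddCommGroup A] [Group G] (h : RankBound s G)
    (f : Multiplicative A →* G) :
    Module.rank ℤ A ≤ s + Module.rank ℤ (kerMod f) := by
  have key : ∀ a : A, f (Multiplicative.ofAdd (Quotient.out (Submodule.Quotient.mk (p := kerMod f) a)))
      = f (Multiplicative.ofAdd a) := by
    intro a
    rw [← kerMod_sub, ← Submodule.Quotient.eq]
    exact Quotient.out_eq _
  let g : Multiplicative (A ⧸ kerMod f) →* G :=
    { toFun := fun q => f (Multiplicative.ofAdd (Quotient.out q.toAdd))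
      map_one' := by
        have := key 0
        simpa using this
      map_mul' := by
        intro p q
        obtain ⟨a, ha⟩ := Submodule.Quotient.mk_surjective _ p.toAdd
        obtain ⟨b, hb⟩ := Submodule.Quotient.mk_surjective _ q.toAdd
        rw [toAdd_mul, ← ha, ← hb, ← Submodule.Quotient.mk_add, key, key, key, ofAdd_add, map_mul] }
  have hg : Function.Injective g := by
    intro p q hpq
    obtain ⟨a, ha⟩ := Submodule.Quotient.mk_surjective _ p.toAdd
    obtain ⟨b, hb⟩ := Submodule.Quotient.mk_surjective _ q.toAdd
    have h1 : f (Multiplicative.ofAdd (Quotient.out p.toAdd))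
      = f (Multiplicative.ofAdd (Quotient.out q.toAdd)) := hpq
    rw [← ha, ← hb, key, key, ← kerMod_sub, ← Submodule.Quotient.eq, ha, hb] at h1
    exact Multiplicative.toAdd.injective h1
  rw [← rank_quotient_add_rank_of_isDomain (kerMod f)]
  gcongr
  exact h _ g hg

theorem rank_comap_le {A : Type} [AddCommGroup A] (M : Submodule ℤ A) (N : ℕ) (hN : N ≠ 0) :
    Module.rank ℤ (M.comap (LinearMap.lsmul ℤ A (N : ℤ))) ≤ Module.rank ℤ M := by
  set P := M.comap (LinearMap.lsmul ℤ A (N : ℤ))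
  let g : P →ₗ[ℤ] M := ((LinearMap.lsmul ℤ A (N : ℤ)).comp P.subtype).codRestrict M
    (fun c => c.2)
  have hg : ∀ c : P, (g c : A) = (N : ℤ) • (c : A) := fun c => rfl
  rw [← g.rank_range_add_rank_ker]
  have h0 : Module.rank ℤ g.ker = 0 := by
    rw [rank_eq_zero_iff]
    intro x
    refine ⟨N, by exact_mod_cast hN, ?_⟩
    have := x.2
    rw [LinearMap.mem_ker] at this
    have h2 := hg x.1
    rw [this] at h2
    ext
    simpa using h2.symm
  rw [h0, add_zero]
  exact Submodule.rank_le _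

theorem rankBound_freeGroup (X : Type) : RankBound 1 (FreeGroup X) := by
  intro A _ f hf
  obtain ⟨a, ha⟩ := freeGroup_cyclic_of_comm f hf
  have h1 : Submodule.span ℤ {a} = ⊤ := by
    rw [eq_top_iff]
    intro b _
    obtain ⟨n, rfl⟩ := ha b
    exact Submodule.smul_mem _ _ (Submodule.mem_span_singleton_self a)
  have h2 := rank_span_le (R := ℤ) ({a} : Set A)
  rw [h1, rank_top] at h2
  simpa using h2

/-- the action on a free group by permutation of the basis -/
def permAut (H X : Type) [Group H] [MulAction H X] : H →* MulAut (FreeGroup X) where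
  toFun h := FreeGroup.freeGroupCongr (MulAction.toPerm h)
  map_one' := by
    have h : (MulAction.toPerm (1 : H) : Equiv.Perm X) = Equiv.refl X := by ext; simp
    rw [h, FreeGroup.freeGroupCongr_refl]
    rfl
  map_mul' a b := by
    have h : (MulAction.toPerm (a * b) : Equiv.Perm X)
        = (MulAction.toPerm b : Equiv.Perm X).trans (MulAction.toPerm a) := by
      ext; simp [mul_smul]
    rw [h, ← FreeGroup.freeGroupCongr_trans]
    rfl

open SemidirectProduct in
theorem exists_fixed {H X : Type} [Group H] [MulAction H X] (w : FreeGroup X) (hw : w ≠ 1) :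
    ∃ x : X, ∃ N : ℕ, N ≠ 0 ∧ ∀ g : FreeGroup X ⋊[permAut H X] H, Commute g (inl w) →
      g.right ^ N • x = x := by
  obtain ⟨x, hx⟩ := asympSupp_nonempty w hw
  have hfin : Finite (asympSupp w) := asympSupp_finite w
  refine ⟨x, Nat.card (Equiv.Perm (asympSupp w)), Nat.card_pos.ne', ?_⟩
  intro g hg
  have h1 := congrArg SemidirectProduct.left hg.eq
  simp only [mul_left, left_inl, right_inl, map_one, MulAut.one_apply] at h1
  have h2 : FreeGroup.freeGroupCongr (MulAction.toPerm g.right) w = g.left⁻¹ * w * g.left := by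
    rw [mul_assoc, ← h1]
    change permAut H X g.right w = _
    group
  have h3 : ∀ y, (MulAction.toPerm g.right) y ∈ asympSupp w ↔ y ∈ asympSupp w := by
    intro y
    rw [← asympSupp_map (MulAction.toPerm g.right) w y, h2]
    constructor
    · intro h
      have := asympSupp_conj_subset g.left⁻¹ w h
      simpa using this
    · intro h
      have := asympSupp_conj_subset g.left _ h
      simpa [mul_assoc] using this
  let σ : Equiv.Perm (asympSupp w) := (MulAction.toPerm g.right).subtypePerm h3
  have h4 : σ ^ Nat.card (Equiv.Perm (asympSupp w)) = 1 := pow_card_eq_one'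
  have h5 := congrArg (fun τ : Equiv.Perm (asympSupp w) => (τ ⟨x, hx⟩ : X)) h4
  simp only [σ, Equiv.Perm.subtypePerm_pow, Equiv.Perm.subtypePerm_apply] at h5
  have h6 : (MulAction.toPerm g.right : Equiv.Perm X) ^ Nat.card (Equiv.Perm (asympSupp w))
      = MulAction.toPerm (g.right ^ Nat.card (Equiv.Perm (asympSupp w))) := by
    exact (map_pow (MulAction.toPermHom H X) _ _).symm
  rw [h6] at h5
  simpa using h5

open SemidirectProduct in
theorem rank_le_of_commute {H X : Type} [Group H] [MulAction H X] {s : ℕ}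
    (hs : ∀ x : X, RankBound s (MulAction.stabilizer H x)) (w : FreeGroup X) (hw : w ≠ 1)
    {A : Type} [AddCommGroup A] (f : Multiplicative A →* FreeGroup X ⋊[permAut H X] H)
    (hf : ∀ a, Commute (f a) (inl w)) :
    Module.rank ℤ A ≤ s + Module.rank ℤ (kerMod (rightHom.comp f)) := by
  obtain ⟨x, N, hN, hx⟩ := exists_fixed (H := H) w hw
  let g : Multiplicative A →* MulAction.stabilizer H x :=
    ((rightHom.comp f).comp (powMonoidHom N)).codRestrict (MulAction.stabilizer H x) (by
      intro a
      rw [MulAction.mem_stabilizer_iff]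
      have := hx (f a) (hf a)
      change rightHom (f (a ^ N)) • x = x
      rw [map_pow, map_pow]
      exact this)
  have h1 := (hs x).rank_le g
  refine h1.trans ?_
  gcongr
  refine le_trans (le_of_eq ?_) (rank_comap_le _ N hN)
  have : kerMod g = (kerMod (rightHom.comp f)).comap (LinearMap.lsmul ℤ A (N : ℤ)) := by
    ext a
    rw [Submodule.mem_comap, mem_kerMod, mem_kerMod, ← Subtype.coe_inj]
    change (rightHom.comp f) ((Multiplicative.ofAdd a) ^ N) = 1 ↔
      (rightHom.comp f) (Multiplicative.ofAdd ((N : ℤ) • a)) = 1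
    rw [natCast_zsmul, ofAdd_nsmul]
  rw [this]

open SemidirectProduct in
theorem rank_kerMod_le {H X : Type} [Group H] [MulAction H X]
    {A : Type} [AddCommGroup A] (f : Multiplicative A →* FreeGroup X ⋊[permAut H X] H)
    (hf : Function.Injective f) :
    Module.rank ℤ (kerMod (rightHom.comp f)) ≤ 1 := by
  let g : Multiplicative (kerMod (rightHom.comp f)) →* FreeGroup X :=
    { toFun := fun a => (f (Multiplicative.ofAdd (a.toAdd : A))).left
      map_one' := by simp
      map_mul' := by
        intro a b
        have ha : (f (Multiplicative.ofAdd (a.toAdd : A))).right = 1 := a.toAdd.2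
        simp [ha] }
  have hg : Function.Injective g := by
    intro a b hab
    have ha : (f (Multiplicative.ofAdd (a.toAdd : A))).right = 1 := a.toAdd.2
    have hb : (f (Multiplicative.ofAdd (b.toAdd : A))).right = 1 := b.toAdd.2
    have := hf (SemidirectProduct.ext hab (ha.trans hb.symm))
    exact Multiplicative.toAdd.injective (Subtype.ext (Multiplicative.ofAdd.injective this))
  exact_mod_cast rankBound_freeGroup X _ g hg

theorem kerMod_eq_bot {A G : Type} [AddCommGroup A] [Group G] (f : Multiplicative A →* G) :
    kerMod f = ⊥ ↔ Function.Injective f := by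
  rw [injective_iff_map_eq_one, Submodule.eq_bot_iff]
  exact Iff.rfl

open SemidirectProduct in
theorem exists_left_of_not_injective {H X : Type} [Group H] [MulAction H X]
    {A : Type} [AddCommGroup A] (f : Multiplicative A →* FreeGroup X ⋊[permAut H X] H)
    (hf : Function.Injective f) (h : ¬ Function.Injective (rightHom.comp f)) :
    ∃ w : FreeGroup X, w ≠ 1 ∧ ∀ a, Commute (f a) (inl w) := by
  rw [injective_iff_map_eq_one] at h
  push Not at h
  obtain ⟨a, ha, ha1⟩ := h
  have ha' : (f a).right = 1 := ha
  have h1 : f a = inl (f a).left := by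
    ext
    · simp
    · simp [ha']
  refine ⟨(f a).left, ?_, ?_⟩
  · intro h2
    rw [h2, map_one] at h1
    exact ha1 (hf (h1.trans (map_one f).symm))
  · intro b
    rw [← h1]
    exact (Commute.all b a).map f

open SemidirectProduct in
theorem rankBound_semidirect {H X : Type} [Group H] [MulAction H X] {s : ℕ}
    (hs : ∀ x : X, RankBound s (MulAction.stabilizer H x)) (hH : RankBound (s + 1) H) :
    RankBound (s + 1) (FreeGroup X ⋊[permAut H X] H) := by
  intro A _ f hf
  by_cases h : Function.Injective (rightHom.comp f)
  · exact hH _ _ h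
  · obtain ⟨w, hw, hc⟩ := exists_left_of_not_injective f hf h
    refine (rank_le_of_commute hs w hw f hc).trans ?_
    push_cast
    gcongr
    exact rank_kerMod_le f hf

/-- rigidity property: an element commuting with a subgroup of rank at least `q` of an
abelian subgroup of rank more than `q` commutes with the whole abelian group -/
def Rigid (q : ℕ) (G : Type) [Group G] : Prop :=
  ∀ (A : Type) [AddCommGroup A] (f : Multiplicative A →* G) (L : Submodule ℤ A) (y : G),
    Function.Injective f → (q + 1 : ℕ) ≤ Module.rank ℤ A → q ≤ Module.rank ℤ L →
    (∀ a ∈ L, Commute y (f (Multiplicative.ofAdd a))) → ∀ a, Commute y (f a)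

theorem Rigid.of_injective {q : ℕ} {G G' : Type} [Group G] [Group G'] (j : G →* G')
    (hj : Function.Injective j) (h : Rigid q G') : Rigid q G := by
  intro A _ f L y hf hA hL hy a
  have := h A (j.comp f) L (j y) (hj.comp hf) hA hL (fun a ha => (hy a ha).map j) a
  apply hj
  simpa using this.eq

open SemidirectProduct in
theorem rigid_semidirect {H X : Type} [Group H] [MulAction H X] {s : ℕ}
    (hs : ∀ x : X, RankBound s (MulAction.stabilizer H x)) (hH : Rigid (s + 1) H) :
    Rigid (s + 1) (FreeGroup X ⋊[permAut H X] H) := by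
  intro A _ f L y hf hA hL hy a
  have hinj : Function.Injective (rightHom.comp f) := by
    by_contra h
    obtain ⟨w, hw, hc⟩ := exists_left_of_not_injective f hf h
    have h1 := rank_le_of_commute hs w hw f hc
    have h2 := hA.trans (h1.trans (add_le_add_right (rank_kerMod_le f hf) _))
    have h3 : s + 1 + 1 ≤ s + 1 := by exact_mod_cast h2
    omega
  have h1 := hH A (rightHom.comp f) L (rightHom y) hinj hA hL
    (fun a ha => (hy a ha).map rightHom) a
  by_contra hne
  set c := y * f a * y⁻¹ * (f a)⁻¹ with hc
  have hc1 : c ≠ 1 := by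
    intro h
    apply hne
    rw [hc, mul_inv_eq_one, mul_inv_eq_iff_eq_mul] at h
    exact h
  have hcr : c.right = 1 := by
    change rightHom c = 1
    rw [hc, map_mul, map_mul, map_mul, map_inv, map_inv, mul_inv_eq_one, mul_inv_eq_iff_eq_mul]
    exact h1
  have hcl : c = inl c.left := by
    ext
    · simp
    · simp [hcr]
  have hw : c.left ≠ 1 := by
    intro h
    rw [h, map_one] at hcl
    exact hc1 hcl
  let fL : Multiplicative L →* FreeGroup X ⋊[permAut H X] H :=
    f.comp (AddMonoidHom.toMultiplicative L.subtype.toAddMonoidHom)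
  have hLinj : Function.Injective (rightHom.comp fL) := by
    intro p q hpq
    have := hinj hpq
    exact Multiplicative.toAdd.injective (Subtype.ext (Multiplicative.ofAdd.injective this))
  have hcomm : ∀ l, Commute (fL l) (inl c.left) := by
    intro l
    rw [← hcl, hc]
    have e1 : Commute (fL l) y := (hy l.toAdd l.toAdd.2).symm
    have e2 : Commute (fL l) (f a) := (Commute.all _ a).map f
    exact ((e1.mul_right e2).mul_right e1.inv_right).mul_right e2.inv_right
  have h4 := rank_le_of_commute hs c.left hw fL hcomm
  rw [(kerMod_eq_bot _).2 hLinj, rank_bot, add_zero] at h4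
  have h5 : s + 1 ≤ s := by exact_mod_cast hL.trans h4
  omega


section RAAGBasics

theorem raag_commute {V : Type} {Γ : SimpleGraph V} {u v : V} (h : Γ.Adj u v) :
    Commute (PresentedGroup.of u : RAAG Γ) (PresentedGroup.of v) := by
  have h1 : PresentedGroup.mk (raagRels Γ)
      (FreeGroup.of u * FreeGroup.of v * (FreeGroup.of u)⁻¹ * (FreeGroup.of v)⁻¹) = 1 :=
    PresentedGroup.one_of_mem ⟨u, v, h, rfl⟩
  rw [map_mul, map_mul, map_mul, map_inv, map_inv, mul_inv_eq_one, mul_inv_eq_iff_eq_mul] at h1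
  exact h1

/-- universal property of a right-angled Artin group -/
def raagLift {V G : Type} [Group G] {Γ : SimpleGraph V} (f : V → G)
    (h : ∀ u v, Γ.Adj u v → Commute (f u) (f v)) : RAAG Γ →* G :=
  PresentedGroup.toGroup (f := f) (by
    rintro r ⟨u, v, huv, rfl⟩
    simp only [map_mul, map_inv, FreeGroup.lift_apply_of]
    rw [mul_inv_eq_one, mul_inv_eq_iff_eq_mul]
    exact h u v huv)

theorem raagLift_of {V G : Type} [Group G] {Γ : SimpleGraph V} (f : V → G)
    (h : ∀ u v, Γ.Adj u v → Commute (f u) (f v)) (v : V) :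
    raagLift f h (PresentedGroup.of v) = f v :=
  PresentedGroup.toGroup.of _

/-- functoriality for embeddings of graphs -/
def raagMap {V W : Type} {Γ : SimpleGraph V} {Δ : SimpleGraph W} (e : Γ ↪g Δ) :
    RAAG Γ →* RAAG Δ :=
  raagLift (fun v => PresentedGroup.of (e v)) fun _ _ h => raag_commute (e.map_adj_iff.2 h)

theorem raagMap_of {V W : Type} {Γ : SimpleGraph V} {Δ : SimpleGraph W} (e : Γ ↪g Δ) (v : V) :
    raagMap e (PresentedGroup.of v) = PresentedGroup.of (e v) := raagLift_of _ _ v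

theorem raagMap_injective {V W : Type} {Γ : SimpleGraph V} {Δ : SimpleGraph W} (e : Γ ↪g Δ) :
    Function.Injective (raagMap e) := by
  classical
  let r : RAAG Δ →* RAAG Γ := raagLift
    (fun w => if h : ∃ v, e v = w then PresentedGroup.of h.choose else 1) (by
      intro u v huv
      split_ifs with h1 h2 h2
      · apply raag_commute
        rw [← e.map_adj_iff, h1.choose_spec, h2.choose_spec]
        exact huv
      · exact Commute.one_right _
      · exact Commute.one_left _
      · exact Commute.one_left _)
  have hr : r.comp (raagMap e) = MonoidHom.id _ := by
    apply PresentedGroup.ext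
    intro v
    rw [MonoidHom.comp_apply, raagMap_of, raagLift_of]
    have h : ∃ v', e v' = e v := ⟨v, rfl⟩
    rw [dif_pos h, e.injective h.choose_spec]
    rfl
  exact Function.LeftInverse.injective (g := r) fun x => DFunLike.congr_fun hr x

theorem raag_not_commute {V : Type} {Γ : SimpleGraph V} {u v : V} (hne : u ≠ v)
    (h : ¬ Γ.Adj u v) : ¬ Commute (PresentedGroup.of u : RAAG Γ) (PresentedGroup.of v) := by
  classical
  intro hc
  let s : Equiv.Perm (Fin 3) := Equiv.swap 0 1
  let t : Equiv.Perm (Fin 3) := Equiv.swap 1 2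
  let r : RAAG Γ →* Equiv.Perm (Fin 3) := raagLift
    (fun w => if w = u then s else if w = v then t else 1) (by
      intro a b hab
      split_ifs with h1 h2 h3 h4 h5 h6
      · exact Commute.refl _
      · subst h1 h3; exact absurd hab h
      · exact Commute.one_right _
      · subst h4 h5; exact absurd hab.symm h
      · exact Commute.refl _
      · exact Commute.one_right _
      all_goals exact Commute.one_left _)
  have h1 := hc.map r
  rw [raagLift_of, raagLift_of, if_pos rfl, if_neg hne.symm, if_pos rfl] at h1
  have : ¬ (s * t = t * s) := by decide
  exact this h1

theorem raag_complete_comm {V : Type} {Γ : SimpleGraph V} (h : ∀ u v, u ≠ v → Γ.Adj u v)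
    (x y : RAAG Γ) : Commute x y := by
  classical
  have h0 : ∀ u v, Commute (PresentedGroup.of u : RAAG Γ) (PresentedGroup.of v) := by
    intro u v
    by_cases huv : u = v
    · rw [huv]
    · exact raag_commute (h u v huv)
  have h1 : ∀ v, (PresentedGroup.of v : RAAG Γ) ∈ Subgroup.center (RAAG Γ) := by
    intro v
    rw [Subgroup.mem_center_iff]
    intro g
    have : g ∈ Subgroup.centralizer {(PresentedGroup.of v : RAAG Γ)} :=
      PresentedGroup.generated_by _ _ (fun u => by
        rw [Subgroup.mem_centralizer_singleton_iff]
        exact (h0 u v).eq) g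
    rw [Subgroup.mem_centralizer_singleton_iff] at this
    exact this
  have h2 := PresentedGroup.generated_by _ _ h1 y
  exact Subgroup.mem_center_iff.1 h2 x

end RAAGBasics

section Decomposition

variable {V : Type} (Γ : SimpleGraph V) (v : V)

/-- the group on the vertices other than `v` -/
abbrev RAAGDel : Type := RAAG (Γ.induce {w | w ≠ v})

/-- link of `v`, embedded in the complement of `v` -/
def linkEmb : Γ.induce (Γ.neighborSet v) ↪g Γ.induce {w | w ≠ v} where
  toFun w := ⟨w.1, fun h => Γ.loopless.irrefl v (by
    have h2 : Γ.Adj v w.1 := w.2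
    rw [h] at h2
    exact h2)⟩
  inj' a b h := Subtype.ext (congrArg (fun x : {w | w ≠ v} => x.1) h)
  map_rel_iff' := Iff.rfl

/-- the subgroup generated by the link of `v` -/
def linkSub : Subgroup (RAAGDel Γ v) := (raagMap (linkEmb Γ v)).range

/-- the inclusion of the complement of `v` -/
def delEmb : Γ.induce {w | w ≠ v} ↪g Γ := Embedding.induce _

theorem linkSub_commute (k : RAAGDel Γ v) (hk : k ∈ linkSub Γ v) :
    Commute (raagMap (delEmb Γ v) k) (PresentedGroup.of v) := by
  obtain ⟨x, rfl⟩ := hk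
  have := PresentedGroup.generated_by _
    ((Subgroup.centralizer {(PresentedGroup.of v : RAAG Γ)}).comap
      ((raagMap (delEmb Γ v)).comp (raagMap (linkEmb Γ v)))) (fun u => by
        rw [Subgroup.mem_comap, Subgroup.mem_centralizer_singleton_iff, MonoidHom.comp_apply,
          raagMap_of, raagMap_of]
        exact (raag_commute (show Γ.Adj u.1 v from (u.2 : Γ.Adj v u.1).symm)).eq) x
  rw [Subgroup.mem_comap, Subgroup.mem_centralizer_singleton_iff] at this
  exact this

open SemidirectProduct

/-- the semidirect product model -/
abbrev Model : Type :=
  FreeGroup (RAAGDel Γ v ⧸ linkSub Γ v) ⋊[permAut (RAAGDel Γ v) (RAAGDel Γ v ⧸ linkSub Γ v)]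
    RAAGDel Γ v

open Classical in
/-- generators of the model -/
noncomputable def toModelFun (w : V) : Model Γ v :=
  if h : w = v then inl (FreeGroup.of ((1 : RAAGDel Γ v) : RAAGDel Γ v ⧸ linkSub Γ v))
  else inr (PresentedGroup.of ⟨w, h⟩)

theorem toModel_aux (w : V) (hw : Γ.Adj v w) : Commute (toModelFun Γ v v) (toModelFun Γ v w) := by
  have hne : w ≠ v := hw.ne'
  rw [toModelFun, toModelFun, dif_pos rfl, dif_neg hne]
  set g : RAAGDel Γ v := PresentedGroup.of ⟨w, hne⟩ with hg
  have hmem : g ∈ linkSub Γ v := ⟨PresentedGroup.of ⟨w, hw⟩, raagMap_of _ _⟩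
  have h1 : permAut (RAAGDel Γ v) (RAAGDel Γ v ⧸ linkSub Γ v) g
      (FreeGroup.of ((1 : RAAGDel Γ v) : RAAGDel Γ v ⧸ linkSub Γ v))
      = FreeGroup.of ((1 : RAAGDel Γ v) : RAAGDel Γ v ⧸ linkSub Γ v) := by
    change FreeGroup.freeGroupCongr (MulAction.toPerm g) _ = _
    rw [FreeGroup.freeGroupCongr_apply, FreeGroup.map.of]
    congr 1
    change (((g * 1 : RAAGDel Γ v)) : RAAGDel Γ v ⧸ linkSub Γ v) = _
    rw [mul_one]
    rw [QuotientGroup.eq]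
    simpa using hmem
  have h2 := inl_aut (φ := permAut (RAAGDel Γ v) (RAAGDel Γ v ⧸ linkSub Γ v)) g
    (FreeGroup.of ((1 : RAAGDel Γ v) : RAAGDel Γ v ⧸ linkSub Γ v))
  rw [h1, map_inv, eq_mul_inv_iff_mul_eq] at h2
  exact h2

/-- map to the model -/
noncomputable def toModel : RAAG Γ →* Model Γ v :=
  raagLift (toModelFun Γ v) (by
    intro a b hab
    by_cases ha : a = v
    · subst ha; exact toModel_aux Γ a b hab
    · by_cases hb : b = v
      · subst hb; exact (toModel_aux Γ b a hab.symm).symm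
      · rw [toModelFun, toModelFun, dif_neg ha, dif_neg hb]
        exact (raag_commute (Γ := Γ.induce {w | w ≠ v}) (u := ⟨a, ha⟩) (v := ⟨b, hb⟩) hab).map inr)

/-- conjugates of the generator `v` -/
noncomputable def conjGen (x : RAAGDel Γ v ⧸ linkSub Γ v) : RAAG Γ :=
  raagMap (delEmb Γ v) x.out * PresentedGroup.of v * (raagMap (delEmb Γ v) x.out)⁻¹

theorem conjGen_mk (g : RAAGDel Γ v) : conjGen Γ v (g : RAAGDel Γ v ⧸ linkSub Γ v) =
    raagMap (delEmb Γ v) g * PresentedGroup.of v * (raagMap (delEmb Γ v) g)⁻¹ := by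
  obtain ⟨k, hk⟩ := QuotientGroup.mk_out_eq_mul (linkSub Γ v) g
  have hc := (linkSub_commute Γ v k k.2).eq
  rw [conjGen, hk, map_mul, mul_inv_rev]
  calc _ = raagMap (delEmb Γ v) g * (raagMap (delEmb Γ v) k * PresentedGroup.of v) *
        (raagMap (delEmb Γ v) k)⁻¹ * (raagMap (delEmb Γ v) g)⁻¹ := by simp only [mul_assoc]
    _ = _ := by rw [hc]; group

/-- map back from the model -/
noncomputable def fromModel : Model Γ v →* RAAG Γ :=
  SemidirectProduct.lift (FreeGroup.lift (conjGen Γ v)) (raagMap (delEmb Γ v)) (by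
    intro g
    ext x
    obtain ⟨y, rfl⟩ := QuotientGroup.mk_surjective x
    change FreeGroup.lift (conjGen Γ v) (FreeGroup.freeGroupCongr (MulAction.toPerm g)
      (FreeGroup.of (y : RAAGDel Γ v ⧸ linkSub Γ v))) = raagMap (delEmb Γ v) g *
      FreeGroup.lift (conjGen Γ v) (FreeGroup.of (y : RAAGDel Γ v ⧸ linkSub Γ v)) *
      (raagMap (delEmb Γ v) g)⁻¹
    rw [FreeGroup.freeGroupCongr_apply, FreeGroup.map.of, FreeGroup.lift_apply_of,
      FreeGroup.lift_apply_of]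
    change conjGen Γ v ((g * y : RAAGDel Γ v) : RAAGDel Γ v ⧸ linkSub Γ v) = _
    rw [conjGen_mk, conjGen_mk, map_mul]
    group)

theorem toModel_injective : Function.Injective (toModel Γ v) := by
  have hr : (fromModel Γ v).comp (toModel Γ v) = MonoidHom.id _ := by
    apply PresentedGroup.ext
    intro w
    rw [MonoidHom.comp_apply, toModel, raagLift_of, toModelFun]
    split_ifs with h
    · rw [fromModel, lift_inl, FreeGroup.lift_apply_of, conjGen_mk, h]
      simp
    · rw [fromModel, lift_inr, raagMap_of]
      rfl
  exact Function.LeftInverse.injective (g := fromModel Γ v) fun x => DFunLike.congr_fun hr x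

theorem rankBound_stabilizer {s : ℕ} (h : RankBound s (RAAG (Γ.induce (Γ.neighborSet v))))
    (x : RAAGDel Γ v ⧸ linkSub Γ v) :
    RankBound s (MulAction.stabilizer (RAAGDel Γ v) x) := by
  have h1 : RankBound s (linkSub Γ v) := by
    have e : RAAG (Γ.induce (Γ.neighborSet v)) ≃* linkSub Γ v :=
      MonoidHom.ofInjective (raagMap_injective _)
    exact h.of_injective e.symm.toMonoidHom e.symm.injective
  obtain ⟨g, rfl⟩ := QuotientGroup.mk_surjective x
  let j : MulAction.stabilizer (RAAGDel Γ v) (g : RAAGDel Γ v ⧸ linkSub Γ v) →* linkSub Γ v :=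
    ((MulAut.conj g⁻¹).toMonoidHom.comp (Subgroup.subtype _)).codRestrict _ (by
      rintro ⟨k, hk⟩
      rw [MulAction.mem_stabilizer_iff] at hk
      change ((k * g : RAAGDel Γ v) : RAAGDel Γ v ⧸ linkSub Γ v) = _ at hk
      have := QuotientGroup.eq.1 hk.symm
      simpa [mul_assoc] using this)
  refine h1.of_injective j ?_
  intro a b hab
  have : (MulAut.conj g⁻¹) (a : RAAGDel Γ v) = (MulAut.conj g⁻¹) (b : RAAGDel Γ v) :=
    congrArg Subtype.val hab
  exact Subtype.ext ((MulAut.conj g⁻¹).injective this)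

end Decomposition


theorem rankBound_raag : ∀ (n : ℕ) (V : Type) [Finite V] (Γ : SimpleGraph V) (r : ℕ),
    Nat.card V = n → Γ.CliqueFree (r + 1) → RankBound r (RAAG Γ) := by
  intro n
  induction n using Nat.strong_induction_on with
  | _ n ih =>
    intro V _ Γ r hn hΓ
    rcases isEmpty_or_nonempty V with hV | ⟨⟨v⟩⟩
    · intro A _ f hf
      have h1 : ∀ x : RAAG Γ, x = 1 := by
        intro x
        exact Subgroup.mem_bot.1 (PresentedGroup.generated_by _ ⊥ (fun u => isEmptyElim u) x)
      have : Subsingleton A := ⟨fun a b => Multiplicative.ofAdd.injective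
        (hf ((h1 _).trans (h1 _).symm))⟩
      rw [rank_subsingleton']
      exact zero_le
    · have hcard : Nat.card {w | w ≠ v} < n := by
        rw [← hn]
        exact Finite.card_subtype_lt (x := v) (by simp)
      have hcard2 : Nat.card (Γ.neighborSet v) < n := by
        rw [← hn]
        exact Finite.card_subtype_lt (p := fun w => w ∈ Γ.neighborSet v) (x := v) (by simp)
      obtain ⟨s, rfl⟩ : ∃ s, r = s + 1 := by
        cases r with
        | zero =>
          exfalso
          exact hΓ {v} (by simp [isNClique_iff])
        | succ s => exact ⟨s, rfl⟩
      have h1 : RankBound (s + 1) (RAAGDel Γ v) :=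
        ih _ hcard _ _ _ rfl (hΓ.comap ⟨(Embedding.induce _ : Γ.induce {w | w ≠ v} ↪g Γ).toCopy⟩)
      have h2 : RankBound s (RAAG (Γ.induce (Γ.neighborSet v))) := by
        refine ih _ hcard2 _ _ _ rfl ?_
        classical
        intro t ht
        refine hΓ (insert v (t.map (Function.Embedding.subtype _))) ?_
        refine IsNClique.insert ?_ ?_
        · exact ht.map.mono (by
            rw [SimpleGraph.map_le_iff_le_comap])
        · intro b hb
          obtain ⟨c, _, rfl⟩ := Finset.mem_map.1 hb
          exact c.2
      exact (rankBound_semidirect (rankBound_stabilizer Γ v h2) h1).of_injective _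
        (toModel_injective Γ v)

theorem rigid_raag : ∀ (n : ℕ) (V : Type) [Finite V] (Γ : SimpleGraph V) (T : Set V) (q : ℕ),
    Nat.card V = n → Γ.IsClique T →
    (∀ v, v ∉ T → (Γ.induce (Γ.neighborSet v)).CliqueFree q) → Rigid q (RAAG Γ) := by
  intro n
  induction n using Nat.strong_induction_on with
  | _ n ih =>
    intro V _ Γ T q hn hT hq
    by_cases hv : ∃ v, v ∉ T
    · obtain ⟨v, hv⟩ := hv
      have hcard : Nat.card {w | w ≠ v} < n := by
        rw [← hn]
        exact Finite.card_subtype_lt (x := v) (by simp)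
      obtain ⟨s, rfl⟩ : ∃ s, q = s + 1 := by
        cases q with
        | zero =>
          exfalso
          exact hq v hv ∅ (by simp [isNClique_iff])
        | succ s => exact ⟨s, rfl⟩
      have h1 : Rigid (s + 1) (RAAGDel Γ v) := by
        refine ih _ hcard _ _ (Subtype.val ⁻¹' T) _ rfl ?_ ?_
        · intro a ha b hb hab
          exact hT ha hb (fun h => hab (Subtype.ext h))
        · intro w hw
          refine (hq w.1 hw).comap ?_
          let e : (Γ.induce {w | w ≠ v}).induce ((Γ.induce {w | w ≠ v}).neighborSet w) ↪g
              Γ.induce (Γ.neighborSet w.1) :=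
            ⟨⟨fun x => ⟨x.1.1, x.2⟩, fun a b h => by
              apply Subtype.ext
              apply Subtype.ext
              exact congrArg (fun y : Γ.neighborSet w.1 => y.1) h⟩, Iff.rfl⟩
          exact ⟨e.toCopy⟩
      have h2 : RankBound s (RAAG (Γ.induce (Γ.neighborSet v))) :=
        rankBound_raag _ _ _ _ rfl (hq v hv)
      exact (rigid_semidirect (rankBound_stabilizer Γ v h2) h1).of_injective _
        (toModel_injective Γ v)
    · push Not at hv
      intro A _ f L y _ _ _ _ a
      exact raag_complete_comm (fun u w huw => hT (hv u) (hv w) huw) _ _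

/-- coordinatewise comparison of multiplicative type tags -/
def abAux (r : ℕ) : Multiplicative (Fin r → ℤ) →* (Fin r → Multiplicative ℤ) where
  toFun := fun x i => Multiplicative.ofAdd (x.toAdd i)
  map_one' := rfl
  map_mul' := fun _ _ => rfl

/-- the standard free abelian subgroup attached to pairwise adjacent vertices -/
noncomputable def abHom {V : Type} {Γ : SimpleGraph V} {r : ℕ} (c : Fin r → V)
    (hc : ∀ i j, i ≠ j → Γ.Adj (c i) (c j)) : Multiplicative (Fin r → ℤ) →* RAAG Γ :=
  (MonoidHom.noncommPiCoprod (fun i => zpowersHom (RAAG Γ) (PresentedGroup.of (c i))) (by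
    intro i j hij x y
    simp only [zpowersHom_apply]
    exact ((raag_commute (hc i j hij)).zpow_zpow _ _))).comp (abAux r)

theorem abHom_single {V : Type} {Γ : SimpleGraph V} {r : ℕ} (c : Fin r → V)
    (hc : ∀ i j, i ≠ j → Γ.Adj (c i) (c j)) (i : Fin r) :
    abHom c hc (Multiplicative.ofAdd (Pi.single i 1)) = PresentedGroup.of (c i) := by
  have : abAux r (Multiplicative.ofAdd (Pi.single i 1)) =
      (Pi.mulSingle i (Multiplicative.ofAdd 1) : Fin r → Multiplicative ℤ) := by
    ext j
    by_cases h : j = i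
    · subst h; simp [abAux]
    · simp [abAux, h]
  rw [abHom, MonoidHom.comp_apply, this]
  refine (MonoidHom.noncommPiCoprod_mulSingle _ i _).trans ?_
  simp

theorem abHom_injective {V : Type} {Γ : SimpleGraph V} {r : ℕ} (c : Fin r → V)
    (hc : ∀ i j, i ≠ j → Γ.Adj (c i) (c j)) : Function.Injective (abHom c hc) := by
  classical
  have hcinj : Function.Injective c := by
    intro i j hij
    by_contra h
    exact (hc i j h).ne hij
  let p : RAAG Γ →* Multiplicative (Fin r → ℤ) := raagLift
    (fun w => Multiplicative.ofAdd (fun j => if w = c j then 1 else 0)) fun _ _ _ => Commute.all _ _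
  have hp : (MonoidHom.toAdditive (p.comp (abHom c hc))).toIntLinearMap =
      (LinearMap.id : (Fin r → ℤ) →ₗ[ℤ] (Fin r → ℤ)) := by
    refine (Pi.basisFun ℤ (Fin r)).ext fun i => ?_
    rw [Pi.basisFun_apply]
    change (p (abHom c hc (Multiplicative.ofAdd (Pi.single i 1)))).toAdd = Pi.single i 1
    rw [abHom_single, raagLift_of]
    ext j
    simp [Pi.single_apply, hcinj.eq_iff, eq_comm]
  refine Function.LeftInverse.injective (g := p) fun x => ?_
  exact LinearMap.congr_fun hp x

theorem path_mono {m n : ℕ} (h : m ≤ n) :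
    ∃ φ : GG (pathGraph m) →* GG (pathGraph n), Function.Injective φ := by
  let e : (pathGraph m)ᶜ ↪g (pathGraph n)ᶜ :=
    ⟨(Fin.castLEEmb h), by
      intro a b
      simp [SimpleGraph.compl_adj, pathGraph_adj, Fin.ext_iff]⟩
  exact ⟨raagMap e, raagMap_injective e⟩

theorem path_even_cliqueFree (k : ℕ) : (pathGraph (2 * k))ᶜ.CliqueFree (k + 1) := by
  intro t ht
  have hlt : (Finset.range k).card < t.card := by rw [ht.2, Finset.card_range]; omega
  obtain ⟨x, hx, y, hy, hxy, he⟩ := Finset.exists_ne_map_eq_of_card_lt_of_maps_to hlt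
    (f := fun x : Fin (2 * k) => x.1 / 2) (by
      intro x _
      have := x.2
      simp only [Finset.coe_range, Set.mem_Iio]
      omega)
  have := ht.1 hx hy hxy
  rw [SimpleGraph.compl_adj, pathGraph_adj] at this
  have h2 := this.2
  have h3 : x.1 ≠ y.1 := fun h => hxy (Fin.ext h)
  omega

theorem path_odd_link_cliqueFree (q : ℕ) (v : Fin (2 * q + 1)) (hv : v.1 % 2 = 1) :
    ((pathGraph (2 * q + 1))ᶜ.induce ((pathGraph (2 * q + 1))ᶜ.neighborSet v)).CliqueFree q := by
  intro t ht
  have hvq := v.2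
  have hlt : ((Finset.range q).erase (v.1 / 2)).card < t.card := by
    rw [ht.2, Finset.card_erase_of_mem, Finset.card_range]
    · omega
    · rw [Finset.mem_range]; omega
  have hnb : ∀ x : (pathGraph (2 * q + 1))ᶜ.neighborSet v,
      x.1.1 ≠ v.1 ∧ x.1.1 + 1 ≠ v.1 ∧ v.1 + 1 ≠ x.1.1 := by
    intro x
    have h : (pathGraph (2 * q + 1))ᶜ.Adj v x.1 := x.2
    rw [SimpleGraph.compl_adj, pathGraph_adj] at h
    have h1 : v.1 ≠ x.1.1 := fun h' => h.1 (Fin.ext h')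
    have h2 := h.2
    omega
  obtain ⟨x, hx, y, hy, hxy, he⟩ := Finset.exists_ne_map_eq_of_card_lt_of_maps_to hlt
    (f := fun x => if x.1.1 < v.1 then x.1.1 / 2 else (x.1.1 - 1) / 2) (by
      intro x _
      have h1 := x.1.2
      have h2 := hnb x
      simp only [Finset.mem_coe, Finset.mem_erase, Finset.mem_range]
      split_ifs <;> omega)
  have h := ht.1 hx hy hxy
  have h' : (pathGraph (2 * q + 1))ᶜ.Adj x.1 y.1 := h
  rw [SimpleGraph.compl_adj, pathGraph_adj] at h'
  have h2 := h'.2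
  have h3 : x.1.1 ≠ y.1.1 := fun h => hxy (Subtype.ext (Fin.ext h))
  have h4 := hnb x
  have h5 := hnb y
  split_ifs at he <;> omega

theorem no_embed_even (k : ℕ) (φ : GG (pathGraph (2 * k + 1)) →* GG (pathGraph (2 * k)))
    (hφ : Function.Injective φ) : False := by
  let c : Fin (k + 1) → Fin (2 * k + 1) := fun i => ⟨2 * i.1, by omega⟩
  have hc : ∀ i j, i ≠ j → (pathGraph (2 * k + 1))ᶜ.Adj (c i) (c j) := by
    intro i j hij
    have : i.1 ≠ j.1 := fun h => hij (Fin.ext h)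
    rw [SimpleGraph.compl_adj, pathGraph_adj]
    simp only [c, ne_eq, Fin.mk.injEq]
    omega
  have h := rankBound_raag _ _ _ _ rfl (path_even_cliqueFree k) _ (φ.comp (abHom c hc))
    (hφ.comp (abHom_injective c hc))
  rw [rank_fin_fun] at h
  have : k + 1 ≤ k := by exact_mod_cast h
  omega

theorem no_embed_odd (q : ℕ) (φ : GG (pathGraph (2 * q + 2)) →* GG (pathGraph (2 * q + 1)))
    (hφ : Function.Injective φ) : False := by
  have hr : Rigid q (GG (pathGraph (2 * q + 1))) := by
    refine rigid_raag _ _ _ {v | v.1 % 2 = 0} q rfl ?_ ?_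
    · intro a ha b hb hab
      have ha' : a.1 % 2 = 0 := ha
      have hb' : b.1 % 2 = 0 := hb
      rw [SimpleGraph.compl_adj, pathGraph_adj]
      refine ⟨hab, ?_⟩
      omega
    · intro v hv
      have hv' : ¬ (v.1 % 2 = 0) := hv
      exact path_odd_link_cliqueFree q v (by omega)
  let c : Fin (q + 1) → Fin (2 * q + 2) := fun i => ⟨2 * i.1 + 1, by omega⟩
  have hc : ∀ i j, i ≠ j → (pathGraph (2 * q + 2))ᶜ.Adj (c i) (c j) := by
    intro i j hij
    have : i.1 ≠ j.1 := fun h => hij (Fin.ext h)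
    rw [SimpleGraph.compl_adj, pathGraph_adj]
    simp only [c, ne_eq, Fin.mk.injEq]
    omega
  let b : Fin q → (Fin (q + 1) → ℤ) := fun i => Pi.single i.succ 1
  have hb : LinearIndependent ℤ b := by
    have := (Pi.basisFun ℤ (Fin (q + 1))).linearIndependent.comp Fin.succ (Fin.succ_injective q)
    convert this using 1
    · ext i
      simp [b]
    · exact Subsingleton.elim _ _
  have hL : (q : Cardinal) ≤ Module.rank ℤ (Submodule.span ℤ (Set.range b)) := by
    rw [rank_span hb, Cardinal.mk_range_eq _ hb.injective]
    simp
  let y : GG (pathGraph (2 * q + 2)) := PresentedGroup.of 0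
  have hy : ∀ a ∈ Submodule.span ℤ (Set.range b),
      Commute y (abHom c hc (Multiplicative.ofAdd a)) := by
    intro a ha
    induction ha using Submodule.span_induction with
    | mem x hx =>
      obtain ⟨i, rfl⟩ := hx
      rw [abHom_single]
      apply raag_commute
      rw [SimpleGraph.compl_adj, pathGraph_adj]
      simp [c, Fin.ext_iff]
    | zero => simp
    | add x z _ _ hx hz =>
      rw [ofAdd_add, map_mul]
      exact hx.mul_right hz
    | smul n x _ hx =>
      rw [ofAdd_zsmul, map_zpow]
      exact hx.zpow_right n
  have h := hr _ (φ.comp (abHom c hc)) _ (φ y) (hφ.comp (abHom_injective c hc))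
    (by rw [rank_fin_fun]) hL (fun a ha => (hy a ha).map φ)
    (Multiplicative.ofAdd (Pi.single 0 1))
  have h2 : Commute y (abHom c hc (Multiplicative.ofAdd (Pi.single 0 1))) := by
    apply hφ
    simpa using h.eq
  rw [abHom_single] at h2
  refine raag_not_commute ?_ ?_ h2
  · simp [c, Fin.ext_iff]
  · rw [SimpleGraph.compl_adj, pathGraph_adj]
    simp [c]

/-- `G(P_m) ↪ G(P_n)` iff `m ≤ n`. -/
theorem statement3 (m n : ℕ) (hm : 0 < m) (hn : 0 < n) :
    (∃ φ : GG (pathGraph m) →* GG (pathGraph n), Function.Injective φ) ↔ m ≤ n := by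
  refine ⟨?_, path_mono⟩
  rintro ⟨φ, hφ⟩
  by_contra hlt
  obtain ⟨ψ, hψ⟩ := path_mono (show n + 1 ≤ m by omega)
  have hinj : Function.Injective (φ.comp ψ) := hφ.comp hψ
  generalize φ.comp ψ = θ at hinj
  rcases Nat.even_or_odd' n with ⟨k, rfl | rfl⟩
  · exact no_embed_even k θ hinj
  · exact no_embed_odd k θ hinj
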